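/- For any partitions μ ⊆ λ, the ratio of the number of standard Young tableaux of skew shape λ/μ to the number of standard Young tableaux of shape λ equals s*_μ(λ) / (|λ|)^{↓|μ|}, where s*_μ is the shifted Schur function evaluated at the parts of λ and x^{↓m} = x(x−1)⋯(x−m+1) is the falling factorial. -/

import Mathlib

/-!
Fix `l` and regard both sides as functions of `μ`. Write `μ⁺` for a partition obtained from `μ` by
adding one box.

* Deleting the box which contains `1` gives `f^{l/μ} = ∑_{μ⁺} f^{l/μ⁺}` for `|μ| < |l|`
  (`numSYT_succ`).
* The shifted Schur polynomials satisfy the Pieri rule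
  `(∑ xᵢ - |μ|) s*_μ(x) = ∑_{μ⁺} s*_{μ⁺}(x)` (`schur_pieri`), and `s*_ν(l) = 0` unless `ν ⊆ l`
  (`schur_vanish`).

Hence `f^{l/μ}` and `(|l| - |μ|)! s*_μ(l)` obey the same downward recursion and differ by the
constant factor `s*_l(l)` (`factorial_mul_schur`). No hook formula is needed for this constant:
at `μ = ∅`, where `s*_∅ = 1`, the proportionality reads `|l|! = f^l s*_l(l)`, and dividing the two
relations gives the result.

The Pieri rule is proved from the tableau sum. The entries equal to `1` of a reverse tableau form a
horizontal strip `μ / ν`, so that `s*_μ(x₁, …, x_{n+1}) = ∑_ν w(μ/ν) s*_ν(x₂, …, x_{n+1})` with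
`w(μ/ν) = ∏_{□ ∈ μ/ν} (x₁ - c(□))` (`schur_branch`). By induction on `n` it remains to check a
one-variable identity (`stripWt_pieri`), the commutation of the weight `w` with adding a box to `μ`
and removing a box from `ν`. For a horizontal strip the box added to row `i + 1` of `μ` is matched
with the box removed from row `i` of `ν`: the two contributions differ by `(ν_i - μ_{i+1}) w(μ/ν)`,
also when `ν_i = μ_{i+1}` and both moves are illegal. Together with `(x₁ - μ_0) w(μ/ν)` from the box
added to row `0`, these differences add up to `(x₁ - |μ| + |ν|) w(μ/ν)`.

Partitions are encoded as weakly decreasing sequences `ℕ → ℤ` with finitely many nonzero terms, so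
that adding and removing a box in a given row are inverse bijections on all sequences; sequences
that are not partitions receive the value `0`.
-/

/-- `T` is a standard Young tableau of the skew shape `l / μ`. -/
def IsStdFilling (μ l : YoungDiagram) (T : ℕ × ℕ → ℕ) : Prop :=
  Set.BijOn T (↑(l.cells \ μ.cells)) (Set.Icc 1 (l.card - μ.card)) ∧
  (∀ c, c ∉ l.cells \ μ.cells → T c = 0) ∧
  (∀ i j₁ j₂, j₁ < j₂ → (i, j₁) ∈ l.cells \ μ.cells → (i, j₂) ∈ l.cells \ μ.cells →
    T (i, j₁) < T (i, j₂)) ∧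
  (∀ i₁ i₂ j, i₁ < i₂ → (i₁, j) ∈ l.cells \ μ.cells → (i₂, j) ∈ l.cells \ μ.cells →
    T (i₁, j) < T (i₂, j))

/-- The number `f^{l/μ}` of standard Young tableaux of skew shape `l / μ`. -/
noncomputable def sytCount (μ l : YoungDiagram) : ℕ :=
  Nat.card { T : ℕ × ℕ → ℕ // IsStdFilling μ l T }

/-- `T` is a reverse semistandard tableau of shape `μ` with entries in `{1,…,n}`:
rows weakly decreasing, columns strictly decreasing (and `0` outside `μ`). -/
def IsRevTab (μ : YoungDiagram) (n : ℕ) (T : ℕ × ℕ → ℕ) : Prop :=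
  (∀ c ∈ μ.cells, 1 ≤ T c ∧ T c ≤ n) ∧
  (∀ c, c ∉ μ.cells → T c = 0) ∧
  (∀ i j₁ j₂, j₁ ≤ j₂ → (i, j₁) ∈ μ.cells → (i, j₂) ∈ μ.cells → T (i, j₂) ≤ T (i, j₁)) ∧
  (∀ i₁ i₂ j, i₁ < i₂ → (i₁, j) ∈ μ.cells → (i₂, j) ∈ μ.cells → T (i₂, j) < T (i₁, j))

/-- The shifted Schur function, via the Okounkov–Olshanski combinatorial formula:
`s*_μ(x) = ∑_T ∏_{□∈μ} (x_{T(□)} − c(□))`, where `T` runs over reverse semistandard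
tableaux of shape `μ` (entries in `{1,…,n}`) and `c(i,j) = j − i` is the content. -/
noncomputable def shiftedSchur (μ : YoungDiagram) (n : ℕ) (x : ℕ → ℚ) : ℚ :=
  ∑ᶠ T : { T : ℕ × ℕ → ℕ // IsRevTab μ n T },
    ∏ c ∈ μ.cells, (x (T.1 c) - ((c.2 : ℚ) - (c.1 : ℚ)))

namespace SkewSYT

open Finset

/-! ### Horizontal strips and the one-variable Pieri rule -/

/-- `a` is a partition with at most `n` parts, encoded as a weakly decreasing integer sequence
which vanishes from index `n` on. -/
def IsShape (n : ℕ) (a : ℕ → ℤ) : Prop := Antitone a ∧ ∀ i, n ≤ i → a i = 0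

/-- `a / b` is a horizontal strip: the row lengths interlace, `a 0 ≥ b 0 ≥ a 1 ≥ b 1 ≥ ⋯`. -/
def Interlace (a b : ℕ → ℤ) : Prop := ∀ i, a (i + 1) ≤ b i ∧ b i ≤ a i

/-- The product of `x - c(□)` over the boxes of row `i` in the columns from `p` to `q - 1`. -/
def rowWt (x : ℚ) (i : ℕ) (p q : ℤ) : ℚ :=
  ∏ t ∈ Ico p.toNat q.toNat, (x - ((t : ℚ) - (i : ℚ)))

open Classical in
/-- The branching weight: the product of `x - c(□)` over the boxes of `a / b` in the first `N`
rows if `a / b` is a horizontal strip, and `0` otherwise. -/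
noncomputable def stripWt (x : ℚ) (N : ℕ) (a b : ℕ → ℤ) : ℚ :=
  if Interlace a b then ∏ i ∈ range N, rowWt x i (b i) (a i) else 0

/-- The sequence `a` with its `i`-th part increased by one. -/
def inc (a : ℕ → ℤ) (i : ℕ) : ℕ → ℤ := fun j => if j = i then a j + 1 else a j

/-- The sequence `a` with its `i`-th part decreased by one. -/
def dec (a : ℕ → ℤ) (i : ℕ) : ℕ → ℤ := fun j => if j = i then a j - 1 else a j

theorem IsShape.nonneg {n : ℕ} {a : ℕ → ℤ} (h : IsShape n a) (i : ℕ) : 0 ≤ a i := by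
  have h1 := h.1 (le_max_left i n)
  have h2 := h.2 _ (le_max_right i n)
  omega

theorem rowWt_succ (x : ℚ) (i : ℕ) {p q : ℤ} (hpq : p ≤ q) (hq : 0 ≤ q) :
    rowWt x i p (q + 1) = (x - ((q : ℚ) - i)) * rowWt x i p q := by
  obtain ⟨m, rfl⟩ := Int.eq_ofNat_of_zero_le hq
  have h1 : ((m : ℤ) + 1).toNat = m + 1 := by omega
  have h2 : (m : ℤ).toNat = m := by omega
  unfold rowWt
  rw [h1, h2, prod_Ico_succ_top (by omega), mul_comm]
  simp

theorem rowWt_pred (x : ℚ) (i : ℕ) {p q : ℤ} (hpq : p ≤ q) (hp : 1 ≤ p) :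
    rowWt x i (p - 1) q = (x - ((p : ℚ) - 1 - i)) * rowWt x i p q := by
  obtain ⟨m, rfl⟩ : ∃ m : ℕ, p = m + 1 := ⟨(p - 1).toNat, by omega⟩
  have h1 : ((m : ℤ) + 1).toNat = m + 1 := by omega
  have h2 : ((m : ℤ) + 1 - 1).toNat = m := by omega
  unfold rowWt
  rw [h1, h2, prod_eq_prod_Ico_succ_bot (by omega)]
  simp

theorem rowWt_eq_one (x : ℚ) (i : ℕ) {p q : ℤ} (h : q ≤ p) : rowWt x i p q = 1 := by
  unfold rowWt
  rw [Ico_eq_empty (by omega), prod_empty]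

theorem stripWt_inc (x : ℚ) {N i : ℕ} {a b : ℕ → ℤ} (hi : i < N) (hab : Interlace a b)
    (hab' : Interlace (inc a i) b) (ha : 0 ≤ a i) :
    stripWt x N (inc a i) b = (x - ((a i : ℚ) - i)) * stripWt x N a b := by
  have hi' : i ∈ range N := by simpa using hi
  rw [stripWt, stripWt, if_pos hab, if_pos hab', ← mul_prod_erase _ _ hi',
    ← mul_prod_erase _ (fun j => rowWt x j (b j) (a j)) hi', ← mul_assoc,
    ← rowWt_succ x i (hab i).2 ha]
  congr 1
  · simp [inc]
  · refine prod_congr rfl fun j hj => ?_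
    simp [inc, (mem_erase.1 hj).1]

theorem stripWt_dec (x : ℚ) {N i : ℕ} {a b : ℕ → ℤ} (hi : i < N) (hab : Interlace a b)
    (hab' : Interlace a (dec b i)) (hb : 1 ≤ b i) :
    stripWt x N a (dec b i) = (x - ((b i : ℚ) - 1 - i)) * stripWt x N a b := by
  have hi' : i ∈ range N := by simpa using hi
  rw [stripWt, stripWt, if_pos hab, if_pos hab', ← mul_prod_erase _ _ hi',
    ← mul_prod_erase _ (fun j => rowWt x j (b j) (a j)) hi', ← mul_assoc,
    ← rowWt_pred x i (hab i).2 hb]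
  congr 1
  · simp [dec]
  · refine prod_congr rfl fun j hj => ?_
    simp [dec, (mem_erase.1 hj).1]

theorem stripWt_zero (x : ℚ) {N : ℕ} {a b : ℕ → ℤ} (h : ¬ Interlace a b) :
    stripWt x N a b = 0 := if_neg h

theorem interlace_inc_zero {a b : ℕ → ℤ} (h : Interlace a b) : Interlace (inc a 0) b := by
  intro j
  obtain ⟨h1, h2⟩ := h j
  have : j + 1 ≠ 0 := by omega
  simp only [inc, this, if_false]
  split_ifs <;> constructor <;> omega

theorem interlace_inc_succ {a b : ℕ → ℤ} (h : Interlace a b) (i : ℕ) :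
    Interlace (inc a (i + 1)) b ↔ a (i + 1) < b i := by
  constructor
  · intro h'
    have := (h' i).1
    simp only [inc] at this
    simp at this
    omega
  · intro hlt j
    have h1 := h j
    simp only [inc]
    by_cases hj : j = i
    · subst hj; simp; omega
    · have : j + 1 ≠ i + 1 := by omega
      simp only [this, if_false]
      split_ifs <;> omega

theorem interlace_dec {a b : ℕ → ℤ} (h : Interlace a b) (i : ℕ) :
    Interlace a (dec b i) ↔ a (i + 1) < b i := by
  constructor
  · intro h'
    have := (h' i).1
    simp only [dec] at this
    simp at this
    omega
  · intro hlt j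
    have h1 := h j
    simp only [dec]
    by_cases hj : j = i
    · subst hj; simp; omega
    · simp only [hj, if_false]
      omega

/-- On a horizontal strip, adding a box to row `i + 1` of `a` is paired with removing a box from
row `i` of `b`: both operations are legal under the same condition `a (i + 1) < b i`, and when
this condition fails the right-hand side vanishes as well. -/
theorem stripWt_pair (x : ℚ) {n i : ℕ} {a b : ℕ → ℤ} (ha : IsShape (n + 1) a) (hi : i < n)
    (h : Interlace a b) :
    stripWt x (n + 1) (inc a (i + 1)) b =
      stripWt x (n + 1) a (dec b i) + ((b i : ℚ) - a (i + 1)) * stripWt x (n + 1) a b := by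
  have h0 := ha.nonneg (i + 1)
  by_cases hlt : a (i + 1) < b i
  · rw [stripWt_inc x (by omega) h ((interlace_inc_succ h i).2 hlt) h0,
      stripWt_dec x (by omega) h ((interlace_dec h i).2 hlt) (by omega)]
    push_cast
    ring
  · have heq : a (i + 1) = b i := le_antisymm (h i).1 (by omega)
    rw [stripWt_zero x (mt (interlace_inc_succ h i).1 hlt),
      stripWt_zero x (mt (interlace_dec h i).1 hlt), heq]
    ring

/-- If `a / b` is not a horizontal strip, adding a box to row `i` of `a` repairs it exactly when
removing a box from row `i` of `b` does, namely when `b i = a i + 1` is the only violation. -/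
theorem stripWt_defect (x : ℚ) {N i : ℕ} {a b : ℕ → ℤ} (ha : Antitone a) (hb : Antitone b)
    (h : ¬ Interlace a b) : stripWt x N (inc a i) b = stripWt x N a (dec b i) := by
  have key1 : Interlace (inc a i) b → b i = a i + 1 := by
    intro h'
    by_contra hne
    refine h fun j => ?_
    have h1 := h' j
    simp only [inc] at h1
    by_cases hj : j = i
    · subst hj; simp at h1; omega
    · simp only [hj, if_false] at h1
      split_ifs at h1 <;> omega
  have key2 : Interlace a (dec b i) → b i = a i + 1 := by
    intro h'
    by_contra hne
    refine h fun j => ?_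
    have h1 := h' j
    simp only [dec] at h1
    by_cases hj : j = i
    · subst hj; simp at h1; omega
    · simp only [hj, if_false] at h1
      omega
  by_cases heq : b i = a i + 1
  · have hiff : Interlace (inc a i) b ↔ Interlace a (dec b i) := by
      refine forall_congr' fun j => ?_
      have h1 := ha (Nat.le_succ j)
      have h2 := hb (Nat.le_succ j)
      simp only [Nat.succ_eq_add_one] at h1 h2
      simp only [inc, dec]
      by_cases hj : j = i
      · subst hj; simp; omega
      · by_cases hj' : j + 1 = i
        · subst hj'; simp; omega
        · simp [hj, hj']
    by_cases hI : Interlace (inc a i) b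
    · rw [stripWt, stripWt, if_pos hI, if_pos (hiff.1 hI)]
      refine prod_congr rfl fun j _ => ?_
      by_cases hj : j = i
      · subst hj
        rw [rowWt_eq_one, rowWt_eq_one] <;> simp [inc, dec] <;> omega
      · simp [inc, dec, hj]
    · rw [stripWt_zero x hI, stripWt_zero x (mt hiff.2 hI)]
  · rw [stripWt_zero x (mt key1 heq), stripWt_zero x (mt key2 heq)]

/-- The one-variable Pieri rule: how the branching weight commutes with adding a box. -/
theorem stripWt_pieri (x : ℚ) {n : ℕ} {a b : ℕ → ℤ} (ha : IsShape (n + 1) a) (hb : IsShape n b) :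
    ∑ i ∈ range (n + 1), stripWt x (n + 1) (inc a i) b =
      (x - ∑ i ∈ range (n + 1), (a i : ℚ) + ∑ i ∈ range n, (b i : ℚ)) * stripWt x (n + 1) a b +
        ∑ i ∈ range n, stripWt x (n + 1) a (dec b i) := by
  by_cases h : Interlace a b
  · rw [sum_range_succ', sum_congr rfl fun i hi =>
      stripWt_pair x ha (by simpa using hi : i < n) h, sum_add_distrib, ← sum_mul,
      stripWt_inc x (by omega) h (interlace_inc_zero h) (ha.nonneg 0),
      sum_range_succ' (fun i => (a i : ℚ)), sum_sub_distrib]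
    push_cast
    ring
  · rw [stripWt_zero x h, mul_zero, zero_add, sum_range_succ,
      sum_congr rfl fun i _ => stripWt_defect x ha.1 hb.1 h]
    -- In row `n` the sequence `b` is `0`, so a box added there cannot repair the strip.
    rw [stripWt_zero x (a := inc a n), add_zero]
    intro h'
    refine h fun j => ?_
    have h1 := h' j
    have h2 := ha.nonneg j
    have h3 := hb.2 j
    simp only [inc] at h1
    by_cases hj : j = n
    · subst hj; simp at h1 h3; omega
    · simp only [hj, if_false] at h1
      split_ifs at h1 <;> omega

/-! ### Reverse tableaux, the branching rule and the Pieri rule -/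

/-- A family of functions which are constant off a finite set of indices and take finitely many
values at each index is finite. -/
theorem finite_of_finset {α β : Type*} {S : Set (α → β)} (K : Finset α) (s : α → Set β) (d : β)
    (hs : ∀ c ∈ K, (s c).Finite) (hK : ∀ f ∈ S, ∀ c ∈ K, f c ∈ s c)
    (hd : ∀ f ∈ S, ∀ c ∉ K, f c = d) : S.Finite := by
  have hfin : {g : K → β | ∀ c : K, g c ∈ s c}.Finite := Set.Finite.pi' fun (c : K) => hs c c.2
  refine Set.Finite.of_injOn (f := fun f (c : K) => f c) (t := {g : K → β | ∀ c : K, g c ∈ s c})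
    (fun f hf (c : K) => hK f hf c c.2) ?_ hfin
  intro f hf g hg h
  funext c
  by_cases hc : c ∈ K
  · exact congrFun h ⟨c, hc⟩
  · rw [hd f hf c hc, hd g hg c hc]

/-- `T` is a reverse semistandard tableau with entries in `{1,…,n}` of shape `a`, a partition with
at most `n` parts given by its sequence of row lengths; `T` is `0` off the shape. -/
structure IsRT (n : ℕ) (a : ℕ → ℤ) (T : ℕ × ℕ → ℕ) : Prop where
  shape : IsShape n a
  mem : ∀ i j : ℕ, (j : ℤ) < a i → 1 ≤ T (i, j) ∧ T (i, j) ≤ n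
  off : ∀ i j : ℕ, a i ≤ j → T (i, j) = 0
  row : ∀ i j₁ j₂ : ℕ, j₁ ≤ j₂ → (j₂ : ℤ) < a i → T (i, j₂) ≤ T (i, j₁)
  col : ∀ i₁ i₂ j : ℕ, i₁ < i₂ → (j : ℤ) < a i₂ → T (i₂, j) < T (i₁, j)

/-- The product of `x_{T(□)} - c(□)` over the boxes `□` of `a`. -/
def tabWt (n : ℕ) (a : ℕ → ℤ) (x : ℕ → ℚ) (T : ℕ × ℕ → ℕ) : ℚ :=
  ∏ i ∈ range n, ∏ j ∈ range (a i).toNat, (x (T (i, j)) - ((j : ℚ) - (i : ℚ)))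

/-- The shifted Schur polynomial of the shape `a` in `x 1, …, x n`; it is `0` if `a` is not a
partition with at most `n` parts. -/
noncomputable def schur (n : ℕ) (a : ℕ → ℤ) (x : ℕ → ℚ) : ℚ :=
  ∑ᶠ T ∈ {T | IsRT n a T}, tabWt n a x T

theorem finite_isRT (n : ℕ) (a : ℕ → ℤ) : {T | IsRT n a T}.Finite := by
  refine finite_of_finset (range n ×ˢ range (a 0).toNat) (fun _ => Set.Iic n) 0
    (fun _ _ => Set.finite_Iic n) ?_ ?_
  · rintro T hT ⟨i, j⟩ -
    by_cases h : (j : ℤ) < a i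
    · exact (hT.mem i j h).2
    · rw [Set.mem_Iic, hT.off i j (by omega)]; omega
  · rintro T hT ⟨i, j⟩ hc
    refine hT.off i j ?_
    simp only [mem_product, mem_range, not_and_or, not_lt] at hc
    have h0 := hT.shape.1 (Nat.zero_le i)
    rcases hc with hc | hc
    · have := hT.shape.2 i hc; omega
    · omega

theorem schur_eq_zero {n : ℕ} {a : ℕ → ℤ} (x : ℕ → ℚ) (h : ¬ IsShape n a) : schur n a x = 0 := by
  unfold schur
  have : {T | IsRT n a T} = ∅ := by
    ext T
    simp only [Set.mem_ofPred_eq, Set.mem_empty_iff_false, iff_false]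
    exact fun hT => h hT.shape
  rw [this]
  simp

theorem finite_interlace {N : ℕ} {a : ℕ → ℤ} (ha : ∀ i, N ≤ i → a i = 0) :
    {b | Interlace a b}.Finite := by
  refine finite_of_finset (range N) (fun i => Set.Icc (a (i + 1)) (a i)) 0
    (fun _ _ => Set.finite_Icc _ _) (fun b hb i _ => hb i) ?_
  intro b hb i hi
  have hN : N ≤ i := by simpa using hi
  have h := hb i
  rw [ha i hN, ha (i + 1) (by omega)] at h
  omega

theorem Interlace.antitone {a b : ℕ → ℤ} (h : Interlace a b) : Antitone a ∧ Antitone b :=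
  ⟨antitone_nat_of_succ_le fun i => (h i).1.trans (h i).2,
    antitone_nat_of_succ_le fun i => (h (i + 1)).2.trans (h i).1⟩

/-- A downward closed bounded set of natural numbers is an initial segment. -/
theorem exists_initial (p : ℕ → Prop) (hp : ∀ i j, i ≤ j → p j → p i) (hb : ∃ j, ¬ p j) :
    ∃ b : ℕ, ∀ j, p j ↔ j < b := by
  classical
  refine ⟨Nat.find hb, fun j => ⟨fun h => ?_, fun h => not_not.1 (Nat.find_min hb h)⟩⟩
  by_contra hle
  exact Nat.find_spec hb (hp _ _ (not_lt.1 hle) h)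

/-- The entries of `T` are raised by one on the shape `a`. If `T` is a tableau of a shape contained
in `a`, the boxes of `a` outside that shape, where `T` is `0`, thereby receive the entry `1`. -/
def raise (a : ℕ → ℤ) (T : ℕ × ℕ → ℕ) : ℕ × ℕ → ℕ :=
  fun c => T c + if (c.2 : ℤ) < a c.1 then 1 else 0

theorem isRT_raise {n : ℕ} {a b : ℕ → ℤ} {T : ℕ × ℕ → ℕ} (h : Interlace a b) (hT : IsRT n b T) :
    IsRT (n + 1) a (raise a T) := by
  have hs := hT.shape
  have hba : ∀ i, b i ≤ a i := fun i => (h i).2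
  refine ⟨⟨h.antitone.1, fun i hi => ?_⟩, fun i j hj => ?_, fun i j hj => ?_,
    fun i j₁ j₂ hj hj₂ => ?_, fun i₁ i₂ j hi hj => ?_⟩
  · obtain ⟨k, rfl⟩ : ∃ k, i = k + 1 := ⟨i - 1, by omega⟩
    have h1 := (h k).1
    have h2 := (h (k + 1)).2
    have h3 := hs.2 k (by omega)
    have h4 := hs.2 (k + 1) (by omega)
    omega
  · simp only [raise, hj, if_true]
    by_cases hb : (j : ℤ) < b i
    · have := hT.mem i j hb; omega
    · have := hT.off i j (by omega); omega
  · have := hT.off i j ((hba i).trans hj)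
    simp only [raise, this, not_lt.2 hj, if_false]
  · have hj₁ : (j₁ : ℤ) < a i := by omega
    simp only [raise, hj₁, hj₂, if_true]
    by_cases hb : (j₂ : ℤ) < b i
    · have := hT.row i j₁ j₂ hj hb; omega
    · have := hT.off i j₂ (by omega); omega
  · have h1 : a i₂ ≤ b i₁ := by
      obtain ⟨k, rfl⟩ : ∃ k, i₂ = k + 1 := ⟨i₂ - 1, by omega⟩
      exact (h k).1.trans (hs.1 (by omega))
    have h2 := hba i₁
    have hj₁ : (j : ℤ) < a i₁ := by omega
    simp only [raise, hj₁, hj, if_true]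
    by_cases hb : (j : ℤ) < b i₂
    · have := hT.col i₁ i₂ j hi hb; omega
    · have := hT.off i₂ j (by omega)
      have := (hT.mem i₁ j (by omega)).1
      omega

/-- Every reverse tableau arises from `raise`: the entries at least `2` form a smaller shape, and
the entries equal to `1` a horizontal strip. -/
theorem exists_raise {n : ℕ} {a : ℕ → ℤ} {T : ℕ × ℕ → ℕ} (hT : IsRT (n + 1) a T) :
    ∃ b T', Interlace a b ∧ IsRT n b T' ∧ raise a T' = T := by
  have ha := hT.shape
  have hin : ∀ i j, 1 ≤ T (i, j) → (j : ℤ) < a i := by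
    intro i j h
    by_contra hlt
    have := hT.off i j (by omega)
    omega
  have hex : ∀ i, ∃ b : ℕ, ∀ j, 2 ≤ T (i, j) ↔ j < b := by
    intro i
    refine exists_initial _ (fun j₁ j₂ hj h => h.trans (hT.row i j₁ j₂ hj (hin _ _ (by omega))))
      ⟨(a i).toNat, ?_⟩
    rw [hT.off i _ (by omega)]
    omega
  choose b hb using hex
  have hI : Interlace a fun i => (b i : ℤ) := by
    intro i
    beta_reduce
    constructor
    · by_contra hlt
      have h1 := hT.col i (i + 1) (b i) (by omega) (by omega)
      have h2 := hT.mem (i + 1) (b i) (by omega)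
      have h3 := (hb i (b i)).1 (by omega)
      omega
    · by_contra hlt
      have h0 := ha.nonneg i
      have h1 := (hb i (a i).toNat).2 (by omega)
      have h2 := hin i (a i).toNat (by omega)
      omega
  have hcolbd : ∀ i j : ℕ, (j : ℤ) < a i → T (i, j) + i ≤ n + 1 := by
    intro i j
    induction i with
    | zero => intro h; have := hT.mem 0 j h; omega
    | succ k ih =>
      intro h
      have h1 := ha.1 (Nat.le_succ k)
      have h2 := ih (by simp only [Nat.succ_eq_add_one] at h1; omega)
      have h3 := hT.col k (k + 1) j (by omega) h
      omega
  refine ⟨fun i => (b i : ℤ), fun c => T c - 1, hI, ⟨⟨hI.antitone.2, fun i hi => ?_⟩,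
    fun i j hj => ?_, fun i j hj => ?_, fun i j₁ j₂ hj hj₂ => ?_, fun i₁ i₂ j hi hj => ?_⟩, ?_⟩
  · beta_reduce
    by_contra hne
    have h1 := (hb i 0).2 (by omega)
    have h2 := hcolbd i 0 (hin i 0 (by omega))
    omega
  · have h1 := (hb i j).2 (by omega)
    have h2 := hT.mem i j (hin i j (by omega))
    omega
  · have h1 := mt (hb i j).1 (by omega)
    omega
  · have h1 := hT.row i j₁ j₂ hj ((hI i).2.trans_lt' hj₂)
    omega
  · have h1 := hT.col i₁ i₂ j hi ((hI i₂).2.trans_lt' hj)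
    have h2 := (hb i₂ j).2 (by omega)
    omega
  · funext ⟨i, j⟩
    simp only [raise]
    split_ifs with h
    · have := hT.mem i j h; omega
    · have := hT.off i j (by omega); omega

theorem tabWt_raise {n : ℕ} {a b : ℕ → ℤ} {T : ℕ × ℕ → ℕ} (x : ℕ → ℚ) (h : Interlace a b)
    (hT : IsRT n b T) : tabWt (n + 1) a x (raise a T) =
      stripWt (x 1) (n + 1) a b * tabWt n b (fun m => x (m + 1)) T := by
  have hs := hT.shape
  have hrow : ∀ i, ∏ j ∈ range (a i).toNat, (x (raise a T (i, j)) - ((j : ℚ) - (i : ℚ))) =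
      rowWt (x 1) i (b i) (a i) *
        ∏ j ∈ range (b i).toNat, (x (T (i, j) + 1) - ((j : ℚ) - (i : ℚ))) := by
    intro i
    have hle := (h i).2
    rw [← prod_range_mul_prod_Ico _ (by omega : (b i).toNat ≤ (a i).toNat), mul_comm]
    congr 1
    · refine prod_congr rfl fun j hj => ?_
      have hj := mem_Ico.1 hj
      have h0 := hT.off i j (by omega)
      have h1 : (j : ℤ) < a i := by omega
      simp [raise, h0, h1]
    · refine prod_congr rfl fun j hj => ?_
      have hj := mem_range.1 hj
      have h1 : (j : ℤ) < a i := by omega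
      simp [raise, h1]
  have hlast : tabWt n b (fun m => x (m + 1)) T =
      ∏ i ∈ range (n + 1), ∏ j ∈ range (b i).toNat, (x (T (i, j) + 1) - ((j : ℚ) - (i : ℚ))) := by
    rw [prod_range_succ, hs.2 n le_rfl]
    simp [tabWt]
  rw [hlast, stripWt, if_pos h, ← prod_mul_distrib]
  exact prod_congr rfl fun i _ => hrow i

/-- Branching rule: the entries equal to `1` of a reverse tableau form a horizontal strip, and the
others form a reverse tableau in one variable fewer. -/
theorem schur_branch {n N : ℕ} {a : ℕ → ℤ} (ha : ∀ i, N ≤ i → a i = 0) (x : ℕ → ℚ) :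
    schur (n + 1) a x =
      ∑ᶠ b, stripWt (x 1) (n + 1) a b * schur n b (fun m => x (m + 1)) := by
  have hsupp : Function.support (fun b => stripWt (x 1) (n + 1) a b *
      schur n b (fun m => x (m + 1))) ⊆ ((finite_interlace ha).toFinset : Set (ℕ → ℤ)) := by
    intro b hb
    simp only [Set.Finite.coe_toFinset, Set.mem_ofPred_eq]
    by_contra h
    exact hb (by simp only [stripWt_zero _ h, zero_mul])
  rw [finsum_eq_sum_of_support_subset _ hsupp]
  unfold schur
  rw [finsum_mem_eq_finite_toFinset_sum _ (finite_isRT (n + 1) a)]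
  have h1 : ∀ b, ∑ᶠ T ∈ {T | IsRT n b T}, tabWt n b (fun m => x (m + 1)) T =
      ∑ T ∈ (finite_isRT n b).toFinset, tabWt n b (fun m => x (m + 1)) T :=
    fun b => finsum_mem_eq_finite_toFinset_sum _ (finite_isRT n b)
  simp only [h1, mul_sum]
  rw [sum_sigma']
  symm
  refine sum_bij (fun p _ => raise a p.2) ?_ ?_ ?_ ?_
  · rintro ⟨b, T⟩ hp
    simp only [mem_sigma, Set.Finite.mem_toFinset, Set.mem_ofPred_eq] at hp ⊢
    exact isRT_raise hp.1 hp.2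
  · rintro ⟨b, T⟩ hp ⟨b', T'⟩ hp' heq
    simp only [mem_sigma, Set.Finite.mem_toFinset, Set.mem_ofPred_eq] at hp hp' heq
    have hTT : T = T' := by
      funext c
      have := congrFun heq c
      simp only [raise] at this
      omega
    subst hTT
    -- The shape is recovered from the tableau as its support.
    have hbb : b = b' := by
      funext i
      have hn := hp.2.shape.nonneg i
      have hn' := hp'.2.shape.nonneg i
      by_contra hne
      rcases lt_or_gt_of_ne hne with hlt | hlt
      · have h2 := hp.2.off i (b i).toNat (by omega)
        have h3 := hp'.2.mem i (b i).toNat (by omega)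
        omega
      · have h2 := hp'.2.off i (b' i).toNat (by omega)
        have h3 := hp.2.mem i (b' i).toNat (by omega)
        omega
    subst hbb
    rfl
  · intro T hT
    simp only [Set.Finite.mem_toFinset, Set.mem_ofPred_eq] at hT
    obtain ⟨b, T', hI, hT', rfl⟩ := exists_raise hT
    exact ⟨⟨b, T'⟩, by simpa using ⟨hI, hT'⟩, rfl⟩
  · rintro ⟨b, T⟩ hp
    simp only [mem_sigma, Set.Finite.mem_toFinset, Set.mem_ofPred_eq] at hp
    exact (tabWt_raise x hp.1 hp.2).symm

/-- Pieri rule for shifted Schur polynomials, by induction on the number of variables. -/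
theorem schur_pieri {n : ℕ} {a : ℕ → ℤ} (ha : IsShape n a) (x : ℕ → ℚ) :
    ∑ i ∈ range n, schur n (inc a i) x =
      (∑ i ∈ range n, x (i + 1) - ∑ i ∈ range n, (a i : ℚ)) * schur n a x := by
  induction n generalizing a x with
  | zero => simp
  | succ n ih =>
    set y : ℕ → ℚ := fun m => x (m + 1) with hy
    have hinc : ∀ i ∈ range (n + 1), ∀ j, n + 1 ≤ j → inc a i j = 0 := by
      intro i hi j hj
      have : j ≠ i := by have := mem_range.1 hi; omega
      simp [inc, this, ha.2 j hj]
    have hfin : ∀ i ∈ range (n + 1), (Function.support fun b =>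
        stripWt (x 1) (n + 1) (inc a i) b * schur n b y).Finite := by
      intro i hi
      refine (finite_interlace (hinc i hi)).subset fun b hb => ?_
      by_contra h
      exact hb (by simp only [stripWt_zero _ h, zero_mul])
    have hfin0 : (Function.support fun b => stripWt (x 1) (n + 1) a b).Finite := by
      refine (finite_interlace ha.2).subset fun b hb => ?_
      by_contra h
      exact hb (stripWt_zero _ h)
    have hdec : ∀ i, Function.LeftInverse (fun b => inc b i) (fun b => dec b i) := by
      intro i b; funext j; simp only [inc, dec]; split_ifs <;> omega
    have hdec' : ∀ i, Function.RightInverse (fun b => inc b i) (fun b => dec b i) := by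
      intro i b; funext j; simp only [inc, dec]; split_ifs <;> omega
    let e : ℕ → (ℕ → ℤ) ≃ (ℕ → ℤ) := fun i =>
      ⟨fun b => inc b i, fun b => dec b i, hdec' i, hdec i⟩
    -- Adding a box to `b` and removing it again is a bijection of the summation range.
    have hshift : ∀ i, ∑ᶠ b, stripWt (x 1) (n + 1) a (dec b i) * schur n b y =
        ∑ᶠ b, stripWt (x 1) (n + 1) a b * schur n (inc b i) y := by
      intro i
      rw [← finsum_comp_equiv (e i)]
      refine finsum_congr fun b => ?_
      have : dec ((e i) b) i = b := hdec' i b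
      rw [this]
      rfl
    have hfinI : ∀ g : (ℕ → ℤ) → ℚ,
        (Function.support fun b => stripWt (x 1) (n + 1) a b * g b).Finite := fun g =>
      hfin0.subset fun b hb h => hb (by simp only at h; simp [h])
    have hfinD : ∀ i, (Function.support fun b =>
        stripWt (x 1) (n + 1) a (dec b i) * schur n b y).Finite := by
      intro i
      refine (hfin0.preimage ((hdec i).injective.injOn)).subset fun b hb h => hb ?_
      simp only at h
      simp [h]
    -- The Pieri rule in `n` variables, under the branching weight.
    have hih : ∀ b, stripWt (x 1) (n + 1) a b *
        ((∑ i ∈ range n, y (i + 1) - ∑ i ∈ range n, (b i : ℚ)) * schur n b y) =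
        ∑ i ∈ range n, stripWt (x 1) (n + 1) a b * schur n (inc b i) y := by
      intro b
      by_cases hI : Interlace a b
      · by_cases hb : IsShape n b
        · rw [← mul_sum, ih hb]
        · rw [schur_eq_zero y hb, mul_zero, mul_zero]
          refine (sum_eq_zero fun i hi => ?_).symm
          rw [schur_eq_zero, mul_zero]
          intro hs
          refine hb ⟨hI.antitone.2, fun j hj => ?_⟩
          have h1 := hs.2 j hj
          have : j ≠ i := by have := mem_range.1 hi; omega
          simpa [inc, this] using h1
      · simp [stripWt_zero _ hI]
    have hlocal : ∀ b, ∑ i ∈ range (n + 1), stripWt (x 1) (n + 1) (inc a i) b * schur n b y =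
        stripWt (x 1) (n + 1) a b *
          ((x 1 - ∑ i ∈ range (n + 1), (a i : ℚ) + ∑ i ∈ range n, (b i : ℚ)) * schur n b y) +
        ∑ i ∈ range n, stripWt (x 1) (n + 1) a (dec b i) * schur n b y := by
      intro b
      by_cases hb : IsShape n b
      · rw [← sum_mul, stripWt_pieri (x 1) ha hb, ← sum_mul]
        ring
      · simp [schur_eq_zero y hb]
    calc ∑ i ∈ range (n + 1), schur (n + 1) (inc a i) x
        = ∑ i ∈ range (n + 1), ∑ᶠ b, stripWt (x 1) (n + 1) (inc a i) b * schur n b y :=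
          sum_congr rfl fun i hi => schur_branch (hinc i hi) x
      _ = ∑ᶠ b, ∑ i ∈ range (n + 1), stripWt (x 1) (n + 1) (inc a i) b * schur n b y :=
          (finsum_sum_comm _ _ hfin).symm
      _ = ∑ᶠ b, (stripWt (x 1) (n + 1) a b *
          ((x 1 - ∑ i ∈ range (n + 1), (a i : ℚ) + ∑ i ∈ range n, (b i : ℚ)) * schur n b y) +
          ∑ i ∈ range n, stripWt (x 1) (n + 1) a (dec b i) * schur n b y) :=
          finsum_congr hlocal
      _ = ∑ᶠ b, stripWt (x 1) (n + 1) a b *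
          ((x 1 - ∑ i ∈ range (n + 1), (a i : ℚ) + ∑ i ∈ range n, (b i : ℚ)) * schur n b y) +
          ∑ᶠ b, ∑ i ∈ range n, stripWt (x 1) (n + 1) a (dec b i) * schur n b y := by
          refine finsum_add_distrib (hfinI _) ?_
          refine Set.Finite.subset
            (Set.Finite.biUnion (range n).finite_toSet fun i _ => hfinD i) fun b hb => ?_
          obtain ⟨i, hi, h⟩ := exists_ne_zero_of_sum_ne_zero hb
          exact Set.mem_biUnion hi h
      _ = ∑ᶠ b, stripWt (x 1) (n + 1) a b *
          ((x 1 - ∑ i ∈ range (n + 1), (a i : ℚ) + ∑ i ∈ range n, (b i : ℚ)) * schur n b y) +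
          ∑ᶠ b, ∑ i ∈ range n, stripWt (x 1) (n + 1) a b * schur n (inc b i) y := by
          rw [finsum_sum_comm _ _ fun i _ => hfinD i, finsum_sum_comm _ _ fun i _ => hfinI _,
            sum_congr rfl fun i _ => hshift i]
      _ = ∑ᶠ b, stripWt (x 1) (n + 1) a b *
          ((x 1 - ∑ i ∈ range (n + 1), (a i : ℚ) + ∑ i ∈ range n, (b i : ℚ)) * schur n b y) +
          ∑ᶠ b, stripWt (x 1) (n + 1) a b *
            ((∑ i ∈ range n, y (i + 1) - ∑ i ∈ range n, (b i : ℚ)) * schur n b y) := by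
          rw [finsum_congr hih]
      _ = (∑ i ∈ range (n + 1), x (i + 1) - ∑ i ∈ range (n + 1), (a i : ℚ)) *
          schur (n + 1) a x := by
          rw [← finsum_add_distrib (hfinI _) (hfinI _), schur_branch ha.2, mul_finsum]
          refine finsum_congr fun b => ?_
          rw [sum_range_succ' (fun i => x (i + 1))]
          simp only [hy]
          ring

/-! ### Standard tableaux of skew shape -/

/-- The boxes of the skew shape `l / a`. -/
def skew (a l : ℕ → ℤ) : Set (ℕ × ℕ) := {c | a c.1 ≤ c.2 ∧ (c.2 : ℤ) < l c.1}

/-- `T` is a standard tableau with entries `1,…,N` of the skew shape `l / a`, where `a` is required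
to be a partition contained in `l`; `T` is `0` off the shape. -/
structure IsSYT (l : ℕ → ℤ) (N : ℕ) (a : ℕ → ℤ) (T : ℕ × ℕ → ℕ) : Prop where
  anti : Antitone a
  bd : ∀ i, 0 ≤ a i ∧ a i ≤ l i
  bij : Set.BijOn T (skew a l) (Set.Icc 1 N)
  off : ∀ c, c ∉ skew a l → T c = 0
  row : ∀ i j₁ j₂, j₁ < j₂ → (i, j₁) ∈ skew a l → (i, j₂) ∈ skew a l → T (i, j₁) < T (i, j₂)
  col : ∀ i₁ i₂ j, i₁ < i₂ → (i₁, j) ∈ skew a l → (i₂, j) ∈ skew a l → T (i₁, j) < T (i₂, j)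

/-- The number of standard tableaux of shape `l / a` with entries `1,…,N`. -/
noncomputable def numSYT (l : ℕ → ℤ) (N : ℕ) (a : ℕ → ℤ) : ℕ := {T | IsSYT l N a T}.ncard

theorem finite_isSYT {n : ℕ} {l : ℕ → ℤ} (hl : IsShape n l) (N : ℕ) (a : ℕ → ℤ) :
    {T | IsSYT l N a T}.Finite := by
  have hin : ∀ T ∈ {T | IsSYT l N a T}, ∀ c, c ∉ range n ×ˢ range (l 0).toNat → T c = 0 := by
    rintro T hT ⟨i, j⟩ hc
    refine hT.off _ fun h => hc ?_
    have h1 := hT.bd i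
    have h2 := hl.1 (Nat.zero_le i)
    have h3 := h.1
    have h4 := h.2
    simp only at h3 h4
    simp only [mem_product, mem_range]
    refine ⟨?_, by omega⟩
    by_contra hn
    have := hl.2 i (by omega)
    omega
  refine finite_of_finset (range n ×ˢ range (l 0).toNat) (fun _ => Set.Iic N) 0
    (fun _ _ => Set.finite_Iic N) ?_ hin
  rintro T hT c -
  by_cases h : c ∈ skew a l
  · exact (hT.bij.mapsTo h).2
  · rw [Set.mem_Iic, hT.off c h]; omega

theorem mem_skew_inc {a l : ℕ → ℤ} {i : ℕ} (c : ℕ × ℕ) :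
    c ∈ skew (inc a i) l ↔ c ∈ skew a l ∧ ¬ (c.1 = i ∧ (c.2 : ℤ) = a i) := by
  obtain ⟨p, q⟩ := c
  simp only [skew, inc, Set.mem_ofPred_eq]
  by_cases hp : p = i
  · subst hp; simp; omega
  · simp [hp]

open Classical in
/-- The entries of `T` are raised by one on the skew shape `l / a`. If `T` is a standard tableau of
`l / a` with one box removed, that box, where `T` is `0`, thereby receives the entry `1`. -/
noncomputable def raiseSkew (a l : ℕ → ℤ) (T : ℕ × ℕ → ℕ) : ℕ × ℕ → ℕ :=
  fun c => T c + if c ∈ skew a l then 1 else 0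

theorem isSYT_raiseSkew {l a : ℕ → ℤ} {N i : ℕ} {T : ℕ × ℕ → ℕ} (ha : Antitone a)
    (h0 : ∀ i, 0 ≤ a i) (hT : IsSYT l N (inc a i) T) :
    IsSYT l (N + 1) a (raiseSkew a l T) := by
  have hle : ∀ j, a j ≤ l j := by
    intro j
    have := (hT.bd j).2
    simp only [inc] at this
    split_ifs at this <;> omega
  have hi : a i + 1 ≤ l i := by simpa [inc] using (hT.bd i).2
  have hval : ∀ c ∈ skew a l, raiseSkew a l T c = T c + 1 := fun c hc => by simp [raiseSkew, hc]
  have hpos : ∀ c ∈ skew a l, ¬ (c.1 = i ∧ (c.2 : ℤ) = a i) → 1 ≤ T c ∧ T c ≤ N := fun c hc hn =>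
    hT.bij.mapsTo ((mem_skew_inc c).2 ⟨hc, hn⟩)
  have hnew : ∀ c, (c.1 = i ∧ (c.2 : ℤ) = a i) → T c = 0 := fun c hn =>
    hT.off c fun hc => ((mem_skew_inc c).1 hc).2 hn
  refine ⟨ha, fun j => ⟨h0 j, hle j⟩, ⟨fun c hc => ?_, fun c hc c' hc' heq => ?_, fun v hv => ?_⟩,
    fun c hc => ?_, fun k j₁ j₂ hj hc₁ hc₂ => ?_, fun i₁ i₂ j hi' hc₁ hc₂ => ?_⟩
  · rw [hval c hc, Set.mem_Icc]
    by_cases hn : c.1 = i ∧ (c.2 : ℤ) = a i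
    · have := hnew c hn; omega
    · have := hpos c hc hn; omega
  · rw [hval c hc, hval c' hc'] at heq
    by_cases hn : c.1 = i ∧ (c.2 : ℤ) = a i <;> by_cases hn' : c'.1 = i ∧ (c'.2 : ℤ) = a i
    · exact Prod.ext (by omega) (by omega)
    · have := hnew c hn
      have := hpos c' hc' hn'
      omega
    · have := hnew c' hn'
      have := hpos c hc hn
      omega
    · exact hT.bij.injOn ((mem_skew_inc c).2 ⟨hc, hn⟩) ((mem_skew_inc c').2 ⟨hc', hn'⟩) (by omega)
  · rw [Set.mem_Icc] at hv
    by_cases hv1 : v = 1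
    · have h0i := h0 i
      have hc : (i, (a i).toNat) ∈ skew a l := ⟨by simp only; omega, by simp only; omega⟩
      refine ⟨_, hc, ?_⟩
      rw [hval _ hc, hnew _ ⟨rfl, by simp only; omega⟩, hv1]
    · obtain ⟨c, hc, hcv⟩ := hT.bij.surjOn (show v - 1 ∈ Set.Icc 1 N from ⟨by omega, by omega⟩)
      have hc' := ((mem_skew_inc c).1 hc).1
      exact ⟨c, hc', by rw [hval c hc', hcv]; omega⟩
  · simp only [raiseSkew, hc, if_false, add_zero]
    exact hT.off c fun h => hc ((mem_skew_inc c).1 h).1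
  · rw [hval _ hc₁, hval _ hc₂]
    have hn₂ : ¬ (k = i ∧ (j₂ : ℤ) = a i) := by
      rintro ⟨rfl, h⟩
      have := hc₁.1
      simp only at this
      omega
    by_cases hn : k = i ∧ (j₁ : ℤ) = a i
    · have := hnew (k, j₁) hn
      have := hpos _ hc₂ hn₂
      omega
    · have := hT.row k j₁ j₂ hj ((mem_skew_inc _).2 ⟨hc₁, hn⟩) ((mem_skew_inc _).2 ⟨hc₂, hn₂⟩)
      omega
  · rw [hval _ hc₁, hval _ hc₂]
    have hn₂ : ¬ (i₂ = i ∧ (j : ℤ) = a i) := by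
      rintro ⟨rfl, h⟩
      have h1 := hc₁.1
      have h2 := hT.anti hi'.le
      have h3 : i₁ ≠ i₂ := by omega
      simp [inc, h3] at h1 h2
      omega
    by_cases hn : i₁ = i ∧ (j : ℤ) = a i
    · have := hnew (i₁, j) hn
      have := hpos _ hc₂ hn₂
      omega
    · have := hT.col i₁ i₂ j hi' ((mem_skew_inc _).2 ⟨hc₁, hn⟩) ((mem_skew_inc _).2 ⟨hc₂, hn₂⟩)
      omega

/-- Every standard tableau arises from `raiseSkew`: the box containing `1` is the first box of the
skew shape in its row, and adjoining it to `a` gives a partition. -/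
theorem exists_raiseSkew {n : ℕ} {l a : ℕ → ℤ} {N : ℕ} {T : ℕ × ℕ → ℕ} (hl : IsShape n l)
    (hT : IsSYT l (N + 1) a T) :
    ∃ i T', i < n ∧ IsSYT l N (inc a i) T' ∧ raiseSkew a l T' = T := by
  obtain ⟨⟨i, j⟩, hc, hc1⟩ := hT.bij.surjOn (show 1 ∈ Set.Icc 1 (N + 1) from ⟨le_rfl, by omega⟩)
  have h1 : a i ≤ j := hc.1
  have h2 : (j : ℤ) < l i := hc.2
  have hai := hT.bd i
  have hj : (j : ℤ) = a i := by
    by_contra hne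
    have hc' : (i, j - 1) ∈ skew a l := ⟨by simp only; omega, by simp only; omega⟩
    have := hT.row i (j - 1) j (by omega) hc' hc
    have := (hT.bij.mapsTo hc').1
    omega
  have hin : i < n := by
    by_contra hn
    have := hl.2 i (by omega)
    omega
  have hne1 : ∀ c ∈ skew a l, ¬ (c.1 = i ∧ (c.2 : ℤ) = a i) → 2 ≤ T c := by
    intro c hcs hn
    have h3 := (hT.bij.mapsTo hcs).1
    have h4 : T c ≠ 1 := by
      intro h
      have := hT.bij.injOn hcs hc (h.trans hc1.symm)
      rw [this] at hn
      exact hn ⟨rfl, hj⟩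
    omega
  refine ⟨i, fun c => T c - 1, hin, ⟨antitone_nat_of_succ_le fun k => ?_, fun k => ?_,
    ⟨fun c hcs => ?_, fun c hcs c' hcs' heq => ?_, fun v hv => ?_⟩, fun c hcs => ?_,
    fun k j₁ j₂ hj hc₁ hc₂ => ?_, fun i₁ i₂ k hi' hc₁ hc₂ => ?_⟩, ?_⟩
  · have h3 := hT.anti (Nat.le_succ k)
    have h4 := hl.1 (Nat.le_succ k)
    simp only [Nat.succ_eq_add_one] at h3 h4
    by_cases hk : k + 1 = i
    · subst hk
      by_contra hlt
      simp [inc] at hlt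
      have hc' : (k, j) ∈ skew a l := ⟨by simp only; omega, by simp only; omega⟩
      have := hT.col k (k + 1) j (by omega) hc' hc
      have := (hT.bij.mapsTo hc').1
      omega
    · simp only [inc, hk, if_false]
      split_ifs <;> omega
  · have := hT.bd k
    simp only [inc]
    split_ifs with hk
    · subst hk; omega
    · omega
  · rw [mem_skew_inc] at hcs
    have h3 := hne1 c hcs.1 hcs.2
    have h4 := (hT.bij.mapsTo hcs.1).2
    exact ⟨by beta_reduce; omega, by beta_reduce; omega⟩
  · rw [mem_skew_inc] at hcs hcs'
    have h3 := hne1 c hcs.1 hcs.2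
    have h4 := hne1 c' hcs'.1 hcs'.2
    beta_reduce at heq
    exact hT.bij.injOn hcs.1 hcs'.1 (by omega)
  · rw [Set.mem_Icc] at hv
    obtain ⟨c, hcs, hcv⟩ :=
      hT.bij.surjOn (show v + 1 ∈ Set.Icc 1 (N + 1) from ⟨by omega, by omega⟩)
    refine ⟨c, (mem_skew_inc c).2 ⟨hcs, fun hn => ?_⟩, by beta_reduce; omega⟩
    have : c = (i, j) := Prod.ext hn.1 (by simp only; omega)
    rw [this] at hcv
    omega
  · rw [mem_skew_inc, not_and_not_right] at hcs
    by_cases hcs' : c ∈ skew a l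
    · have hn := hcs hcs'
      have : c = (i, j) := Prod.ext hn.1 (by simp only; omega)
      rw [this, hc1]
    · rw [hT.off c hcs']
  · rw [mem_skew_inc] at hc₁ hc₂
    have h3 := hne1 _ hc₁.1 hc₁.2
    have h4 := hT.row k j₁ j₂ hj hc₁.1 hc₂.1
    omega
  · rw [mem_skew_inc] at hc₁ hc₂
    have h3 := hne1 _ hc₁.1 hc₁.2
    have h4 := hT.col i₁ i₂ k hi' hc₁.1 hc₂.1
    omega
  · funext c
    simp only [raiseSkew]
    split_ifs with h
    · have := (hT.bij.mapsTo h).1; omega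
    · rw [hT.off c h]

/-- Sorting standard tableaux of shape `l / a` by the row containing the entry `1`. -/
theorem numSYT_succ {n : ℕ} {l a : ℕ → ℤ} (hl : IsShape n l) (ha : Antitone a)
    (h0 : ∀ i, 0 ≤ a i) (N : ℕ) :
    numSYT l (N + 1) a = ∑ i ∈ range n, numSYT l N (inc a i) := by
  unfold numSYT
  rw [Set.ncard_eq_toFinset_card _ (finite_isSYT hl (N + 1) a),
    sum_congr rfl fun i _ => Set.ncard_eq_toFinset_card _ (finite_isSYT hl N (inc a i)),
    ← card_sigma]
  symm
  refine card_bij (fun p _ => raiseSkew a l p.2) ?_ ?_ ?_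
  · rintro ⟨i, T⟩ hp
    simp only [mem_sigma, Set.Finite.mem_toFinset, Set.mem_ofPred_eq] at hp ⊢
    exact isSYT_raiseSkew ha h0 hp.2
  · rintro ⟨i, T⟩ hp ⟨i', T'⟩ hp' heq
    simp only [mem_sigma, Set.Finite.mem_toFinset, Set.mem_ofPred_eq] at hp hp' heq
    have hTT : T = T' := by
      funext c
      have := congrFun heq c
      simp only [raiseSkew] at this
      omega
    subst hTT
    -- The added box is the only box of `l / a` at which `T` vanishes.
    have hii : i = i' := by
      by_contra hne
      have h1 : a i + 1 ≤ l i := by simpa [inc] using (hp.2.bd i).2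
      have h0i := h0 i
      have hc : (i, (a i).toNat) ∈ skew a l := ⟨by simp only; omega, by simp only; omega⟩
      have h2 := hp.2.off (i, (a i).toNat)
        fun h => ((mem_skew_inc _).1 h).2 ⟨rfl, by simp only; omega⟩
      have h3 := (hp'.2.bij.mapsTo ((mem_skew_inc _).2 ⟨hc, fun h => hne h.1⟩)).1
      omega
    subst hii
    rfl
  · intro T hT
    simp only [Set.Finite.mem_toFinset, Set.mem_ofPred_eq] at hT
    obtain ⟨i, T', hi, hT', rfl⟩ := exists_raiseSkew hl hT
    exact ⟨⟨i, T'⟩, by simpa using ⟨hi, hT'⟩, rfl⟩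

theorem numSYT_self {n : ℕ} {l : ℕ → ℤ} (hl : IsShape n l) : numSYT l 0 l = 1 := by
  have hempty : skew l l = ∅ := by
    ext c
    simp only [skew, Set.mem_ofPred_eq, Set.mem_empty_iff_false, iff_false]
    omega
  have : {T | IsSYT l 0 l T} = {0} := by
    ext T
    simp only [Set.mem_ofPred_eq, Set.mem_singleton_iff]
    constructor
    · intro hT
      funext c
      exact hT.off c (by simp [hempty])
    · rintro rfl
      refine ⟨hl.1, fun i => ⟨hl.nonneg i, le_rfl⟩, ?_, fun _ _ => rfl, ?_, ?_⟩
      · rw [hempty]; simp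
      · simp [hempty]
      · simp [hempty]
  rw [numSYT, this, Set.ncard_singleton]

theorem numSYT_eq_zero {l a : ℕ → ℤ} {N : ℕ} (h : ¬ (Antitone a ∧ ∀ i, 0 ≤ a i ∧ a i ≤ l i)) :
    numSYT l N a = 0 := by
  have : {T | IsSYT l N a T} = ∅ := by
    ext T
    simp only [Set.mem_ofPred_eq, Set.mem_empty_iff_false, iff_false]
    exact fun hT => h ⟨hT.anti, hT.bd⟩
  rw [numSYT, this, Set.ncard_empty]

/-! ### Vanishing and the comparison of the two recursions -/

/-- Vanishing: if `a` is not contained in `l`, every reverse tableau of shape `a` contributes `0`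
to the shifted Schur polynomial at `l`. In the first row, the factors `l_{T(1,j)} - c(1,j)` start
out nonnegative and drop by at most one from box to box, so if none is `0` they are all positive;
by strictness of the columns this forces `a i ≤ l i`. -/
theorem schur_vanish {n : ℕ} {l a : ℕ → ℤ} (hl : IsShape n l) (h : ∃ i, l i < a i) :
    schur n a (fun m => (l (m - 1) : ℚ)) = 0 := by
  refine finsum_mem_of_eqOn_zero fun T hT => ?_
  by_contra hne
  have ha := hT.shape
  have hfac : ∀ i < n, ∀ j : ℕ, (j : ℤ) < a i → l (T (i, j) - 1) ≠ (j : ℤ) - i := by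
    intro i hi j hj heq
    refine hne (prod_eq_zero (mem_range.2 hi) (prod_eq_zero (i := j)
      (mem_range.2 (by omega)) ?_))
    beta_reduce
    rw [heq]
    push_cast
    ring
  have hn : ∀ i, 0 < a i → i < n := by
    intro i h
    by_contra hn
    have := ha.2 i (by omega)
    omega
  have hpos : ∀ j : ℕ, (j : ℤ) < a 0 → (j : ℤ) < l (T (0, j) - 1) := by
    intro j
    induction j with
    | zero =>
      intro hj
      have h1 := hfac 0 (hn 0 (by omega)) 0 hj
      have h2 := hl.nonneg (T (0, 0) - 1)
      simp at h1 ⊢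
      omega
    | succ j ih =>
      intro hj
      have h1 := hfac 0 (hn 0 (by omega)) (j + 1) hj
      have h2 := ih (by omega)
      have h3 := hT.row 0 j (j + 1) (by omega) hj
      have h4 : l (T (0, j) - 1) ≤ l (T (0, j + 1) - 1) := hl.1 (by omega)
      simp at h1 ⊢
      omega
  have hcol : ∀ i j : ℕ, (j : ℤ) < a i → i + 1 ≤ T (0, j) := by
    intro i j hj
    -- Read column `j` upwards from row `i`.
    have key : ∀ k ≤ i, k + 1 ≤ T (i - k, j) := by
      intro k
      induction k with
      | zero => intro _; have := (hT.mem i j hj).1; simpa using this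
      | succ k ih =>
        intro hk
        have h1 := ih (by omega)
        have h2 := ha.1 (Nat.sub_le i k)
        have h3 := hT.col (i - (k + 1)) (i - k) j (by omega) (by omega)
        omega
    simpa using key i le_rfl
  obtain ⟨i, hi⟩ := h
  have h1 := hl.nonneg i
  have h2 := ha.1 (Nat.zero_le i)
  have h3 := hcol i (a i - 1).toNat (by omega)
  have h4 := hpos (a i - 1).toNat (by omega)
  have h5 : l (T (0, (a i - 1).toNat) - 1) ≤ l i := hl.1 (by omega)
  omega

theorem schur_zero (n : ℕ) (x : ℕ → ℚ) : schur n (fun _ => 0) x = 1 := by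
  have : {T | IsRT n (fun _ => 0) T} = {0} := by
    ext T
    simp only [Set.mem_ofPred_eq, Set.mem_singleton_iff]
    constructor
    · intro hT
      funext ⟨i, j⟩
      exact hT.off i j (by simp)
    · rintro rfl
      exact ⟨⟨fun _ _ _ => le_rfl, fun _ _ => rfl⟩, fun _ _ h => by omega, fun _ _ _ => rfl,
        fun _ _ _ _ _ => le_rfl, fun _ _ _ _ h => by omega⟩
  rw [schur, this, finsum_mem_singleton]
  simp [tabWt]

/-- With `N = |l| - |a|`, both `N! · s*_a(l)` and the number of standard tableaux of shape `l / a`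
satisfy the recursion `F a = ∑ F (a + box)`, so they are proportional, with factor the value
`s*_l(l)` at the top `a = l`, which is left undetermined. Sequences `a` that are not partitions
contained in `l` are included, both sides then being `0`; at `N = 0` this is the vanishing of
`s*_a(l)`. -/
theorem factorial_mul_schur {n : ℕ} {l : ℕ → ℤ} (hl : IsShape n l) (N : ℕ) (a : ℕ → ℤ)
    (ha : ∀ i, n ≤ i → a i = 0) (hN : ∑ i ∈ range n, l i = ∑ i ∈ range n, a i + N) :
    (N.factorial : ℚ) * schur n a (fun m => (l (m - 1) : ℚ)) =
      numSYT l N a * schur n l (fun m => (l (m - 1) : ℚ)) := by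
  set x : ℕ → ℚ := fun m => (l (m - 1) : ℚ) with hx
  induction N generalizing a with
  | zero =>
    by_cases hle : ∀ i, a i ≤ l i
    · have hal : a = l := by
        funext i
        by_cases hi : i < n
        · exact (sum_eq_sum_iff_of_le fun i _ => hle i).1 (by simpa using hN.symm) i
            (mem_range.2 hi)
        · rw [ha i (by omega), hl.2 i (by omega)]
      subst hal
      simp [numSYT_self hl]
    · rw [numSYT_eq_zero fun h => hle fun i => (h.2 i).2, schur_vanish hl (by simpa using hle)]
      simp
  | succ N ih =>
    by_cases hs : IsShape n a
    · have hstep : ∀ i ∈ range n, (N.factorial : ℚ) * schur n (inc a i) x =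
          numSYT l N (inc a i) * schur n l x := by
        intro i hi
        refine ih _ (fun j hj => ?_) ?_
        · have : j ≠ i := by have := mem_range.1 hi; omega
          simp [inc, this, ha j hj]
        · have : ∑ j ∈ range n, inc a i j = ∑ j ∈ range n, a j + 1 := by
            have h1 : ∀ j, inc a i j = a j + if j = i then 1 else 0 := by
              intro j; simp only [inc]; split_ifs <;> simp
            rw [sum_congr rfl fun j _ => h1 j, sum_add_distrib, sum_ite_eq' (range n) i, if_pos hi]
          rw [this, hN]
          push_cast
          ring
      have hsize : ∑ i ∈ range n, x (i + 1) - ∑ i ∈ range n, (a i : ℚ) = (N : ℚ) + 1 := by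
        have : (∑ i ∈ range n, (l i : ℚ)) = ∑ i ∈ range n, (a i : ℚ) + (N + 1) := by
          exact_mod_cast hN
        simp only [hx, Nat.add_sub_cancel]
        rw [this]
        ring
      have hp := schur_pieri hs x
      rw [hsize] at hp
      rw [Nat.factorial_succ, numSYT_succ hl hs.1 hs.nonneg]
      push_cast
      rw [sum_mul, ← sum_congr rfl hstep, ← mul_sum, hp]
      ring
    · rw [schur_eq_zero x hs, numSYT_eq_zero fun h => hs ⟨h.1, ha⟩]
      simp

/-! ### Translation from Young diagrams -/

/-- The row lengths of a Young diagram, as an integer sequence. -/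
def rows (μ : YoungDiagram) : ℕ → ℤ := fun i => (μ.rowLen i : ℤ)

theorem mem_cells_iff (μ : YoungDiagram) (i j : ℕ) : (i, j) ∈ μ.cells ↔ (j : ℤ) < rows μ i := by
  rw [YoungDiagram.mem_cells, YoungDiagram.mem_iff_lt_rowLen, rows]
  omega

theorem rows_antitone (μ : YoungDiagram) : Antitone (rows μ) := fun i j h => by
  have := μ.rowLen_anti i j h
  simp only [rows]
  omega

theorem rows_shape {μ l : YoungDiagram} (h : μ ≤ l) : IsShape (l.colLen 0) (rows μ) := by
  refine ⟨rows_antitone μ, fun i hi => ?_⟩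
  by_contra hne
  have h0 : (i, 0) ∈ μ.cells := by
    rw [mem_cells_iff]
    simp only [rows] at hne ⊢
    omega
  have h1 : (i, 0) ∈ l := h h0
  rw [YoungDiagram.mem_iff_lt_colLen] at h1
  omega

theorem prod_cells {μ l : YoungDiagram} (h : μ ≤ l) {M : Type*} [CommMonoid M]
    (f : ℕ × ℕ → M) :
    ∏ c ∈ μ.cells, f c =
      ∏ i ∈ range (l.colLen 0), ∏ j ∈ range (rows μ i).toNat, f (i, j) := by
  refine prod_finset_product _ _ _ fun ⟨i, j⟩ => ?_
  have h1 := (rows_shape h).2 i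
  rw [mem_cells_iff, mem_range, mem_range]
  simp only
  omega

theorem card_eq_sum_rows {μ l : YoungDiagram} (h : μ ≤ l) :
    (μ.card : ℤ) = ∑ i ∈ range (l.colLen 0), rows μ i := by
  have h1 := prod_cells h fun _ => Multiplicative.ofAdd (1 : ℕ)
  have h2 := congrArg Multiplicative.toAdd h1
  simp only [prod_const, toAdd_pow, toAdd_prod, toAdd_ofAdd, card_range] at h2
  have h3 : μ.card = ∑ i ∈ range (l.colLen 0), (rows μ i).toNat := by simpa using h2
  rw [h3]
  push_cast
  refine sum_congr rfl fun i _ => ?_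
  simp [rows]

theorem isRevTab_iff {μ l : YoungDiagram} (h : μ ≤ l) (T : ℕ × ℕ → ℕ) :
    IsRevTab μ (l.colLen 0) T ↔ IsRT (l.colLen 0) (rows μ) T := by
  have hanti := rows_antitone μ
  constructor
  · rintro ⟨h1, h2, h3, h4⟩
    refine ⟨rows_shape h, fun i j hj => h1 _ ((mem_cells_iff μ i j).2 hj), fun i j hj => h2 _ ?_,
      fun i j₁ j₂ hj hj₂ => h3 i j₁ j₂ hj ?_ ?_, fun i₁ i₂ j hi hj => h4 i₁ i₂ j hi ?_ ?_⟩
    · rw [mem_cells_iff]; omega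
    · rw [mem_cells_iff]; omega
    · rwa [mem_cells_iff]
    · rw [mem_cells_iff]; exact hj.trans_le (hanti hi.le)
    · rwa [mem_cells_iff]
  · intro hT
    refine ⟨fun ⟨i, j⟩ hc => hT.mem i j ((mem_cells_iff μ i j).1 hc), fun ⟨i, j⟩ hc => ?_,
      fun i j₁ j₂ hj _ hc => hT.row i j₁ j₂ hj ((mem_cells_iff μ _ _).1 hc),
      fun i₁ i₂ j hi _ hc => hT.col i₁ i₂ j hi ((mem_cells_iff μ _ _).1 hc)⟩
    rw [mem_cells_iff] at hc
    exact hT.off i j (by omega)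

theorem shiftedSchur_eq {μ l : YoungDiagram} (h : μ ≤ l) (x : ℕ → ℚ) :
    shiftedSchur μ (l.colLen 0) x = schur (l.colLen 0) (rows μ) x := by
  rw [shiftedSchur, schur, finsum_subtype_eq_finsum_cond (fun T => IsRevTab μ (l.colLen 0) T)
    (f := fun T => ∏ c ∈ μ.cells, (x (T c) - ((c.2 : ℚ) - (c.1 : ℚ))))]
  refine finsum_congr fun T => finsum_congr_Prop (propext (isRevTab_iff h T)) fun _ => ?_
  exact prod_cells h _

theorem sytCount_eq {μ l : YoungDiagram} (h : μ ≤ l) :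
    sytCount μ l = numSYT (rows l) (l.card - μ.card) (rows μ) := by
  have hskew : (↑(l.cells \ μ.cells) : Set (ℕ × ℕ)) = skew (rows μ) (rows l) := by
    ext ⟨i, j⟩
    rw [mem_coe, mem_sdiff, mem_cells_iff, mem_cells_iff, skew, Set.mem_ofPred_eq]
    simp only
    omega
  have hmem : ∀ c, c ∈ l.cells \ μ.cells ↔ c ∈ skew (rows μ) (rows l) := by
    intro c
    rw [← hskew, mem_coe]
  have hle : ∀ i, rows μ i ≤ rows l i := by
    intro i
    by_contra hlt
    have h1 : (i, l.rowLen i) ∈ μ.cells := by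
      rw [mem_cells_iff]; simp only [rows] at hlt ⊢; omega
    have h2 := (mem_cells_iff l _ _).1 (h h1)
    simp only [rows] at h2
    omega
  rw [sytCount, numSYT]
  refine (Nat.card_congr (Equiv.subtypeEquivRight fun T => ?_)).trans (Nat.card_coe_set_eq _)
  rw [IsStdFilling, hskew]
  simp only [hmem]
  constructor
  · rintro ⟨h1, h2, h3, h4⟩
    exact ⟨rows_antitone μ, fun i => ⟨by simp [rows], hle i⟩, h1, h2, h3, h4⟩
  · intro hT
    exact ⟨hT.bij, hT.off, hT.row, hT.col⟩

end SkewSYT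

open SkewSYT in
/-- For partitions `μ ⊆ l`, the ratio `f^{l/μ} / f^l` of numbers of standard Young tableaux
equals `s*_μ(l) / |l|^{↓|μ|}`, where `s*_μ` is the shifted Schur function evaluated at the
parts of `l` and `x^{↓m} = x(x−1)⋯(x−m+1)` is the falling factorial. -/
theorem stmt16 (l μ : YoungDiagram) (hsub : μ ≤ l) :
    (sytCount μ l : ℚ) / (sytCount ⊥ l : ℚ) =
      shiftedSchur μ (l.colLen 0) (fun m => (l.rowLen (m - 1) : ℚ)) /
        (Nat.descFactorial l.card μ.card : ℚ) := by
  have hl := rows_shape (le_refl l)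
  have hcard : μ.card ≤ l.card := Finset.card_le_card hsub
  have hx : (fun m => (l.rowLen (m - 1) : ℚ)) = fun m => (rows l (m - 1) : ℚ) := by
    funext m; simp [rows]
  have hbot : rows ⊥ = fun _ => 0 := by
    funext i
    by_contra hne
    have h0 : (i, 0) ∈ (⊥ : YoungDiagram).cells := by
      rw [mem_cells_iff]
      simp only [rows] at hne ⊢
      omega
    simp at h0
  have hμ := factorial_mul_schur hl (l.card - μ.card) (rows μ) (rows_shape hsub).2 (by
    rw [← card_eq_sum_rows hsub, ← card_eq_sum_rows le_rfl]; omega)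
  have h0 := factorial_mul_schur hl l.card (rows ⊥) (rows_shape bot_le).2 (by
    rw [← card_eq_sum_rows le_rfl, hbot, Finset.sum_const_zero, zero_add])
  have hcb : sytCount ⊥ l = numSYT (rows l) l.card (rows ⊥) := by
    rw [sytCount_eq bot_le]; rfl
  rw [hx, shiftedSchur_eq hsub, sytCount_eq hsub, hcb]
  rw [hbot, schur_zero, mul_one] at h0
  rw [hbot]
  have hfac : ((l.card.factorial : ℕ) : ℚ) =
      (l.card - μ.card).factorial * (Nat.descFactorial l.card μ.card : ℚ) := by
    exact_mod_cast (Nat.factorial_mul_descFactorial hcard).symm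
  have hne : ((l.card.factorial : ℕ) : ℚ) ≠ 0 := by exact_mod_cast Nat.factorial_ne_zero _
  have hD : (Nat.descFactorial l.card μ.card : ℚ) ≠ 0 := fun h => hne (by rw [hfac, h, mul_zero])
  have hF : ((l.card - μ.card).factorial : ℚ) ≠ 0 := by exact_mod_cast Nat.factorial_ne_zero _
  -- The unknown top value `s*_l(l)` is nonzero, since `|l|! = f^l * s*_l(l)`.
  have hf : (numSYT (rows l) l.card (fun _ => 0) : ℚ) ≠ 0 := fun h => hne (by rw [h0, h, zero_mul])
  have hs : schur (l.colLen 0) (rows l) (fun m => (rows l (m - 1) : ℚ)) ≠ 0 :=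
    fun h => hne (by rw [h0, h, mul_zero])
  rw [div_eq_div_iff hf hD]
  refine mul_left_cancel₀ (mul_ne_zero hF hs) ?_
  linear_combination
    (-(Nat.descFactorial l.card μ.card : ℚ) * (l.card - μ.card).factorial) * hμ +
    schur (l.colLen 0) (rows μ) (fun m => (rows l (m - 1) : ℚ)) *
      ((l.card - μ.card).factorial : ℚ) * h0 -
    schur (l.colLen 0) (rows μ) (fun m => (rows l (m - 1) : ℚ)) *
      ((l.card - μ.card).factorial : ℚ) * hfac
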